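/- Fix s ∈ ℝ, k ≥ 1 and distinct points y_1, …, y_k ∈ ℕ, and let θ : ℕ → (0, ∞) satisfy (θ(N) − N)/√N → s as N → ∞. For each N ≥ 1 let ρ^{(N)}_k(y_1,…,y_k) = Z(N,θ(N))^{−1} · Σ_{S ⊇ {y_1,…,y_k}} ∏_{x∈S} (θ(N)^x/x!) · ∏_{x,x'∈S, x<x'} (x'−x)², where the sum is over all N-element subsets S of ℕ containing {y_1,…,y_k} and Z(N,θ) is the sum of the same weights over all N-element subsets of ℕ. Then lim_{N→∞} ρ^{(N)}_k(y_1,…,y_k) = det[ K_s(y_i, y_j) ]_{1≤i,j≤k}, where K_s is the discrete Hermite kernel. (This is the main theorem: the correlation functions of the poissonized Schur–Weyl measure, which coincides with the N-particle Charlier ensemble with θ = ν/N under x_i = λ_i + N − i, converge in the regime ν = N² + (s+o(1))N^{3/2} to the determinantal point process on ℕ with correlation kernel K_s.) -/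

import Mathlib

open Filter
open scoped Nat Topology

noncomputable section

/-- The weight of a finite set `S ⊂ ℕ` in the Charlier ensemble with parameter `θ`:
`∏_{x∈S} θ^x/x! · ∏_{x<x', x,x'∈S} (x'−x)²`. -/
def charlierWeight (θ : ℝ) (S : Finset ℕ) : ℝ :=
  (∏ x ∈ S, θ ^ x / (x ! : ℝ)) *
    ∏ x ∈ S, ∏ y ∈ S.filter (fun y => x < y), ((y : ℝ) - (x : ℝ)) ^ 2

/-- The discrete Hermite kernel with parameter `s ∈ ℝ`:
`K_s(x,y) = (2π·x!·y!)^{−1/2} ∫_s^∞ e^{−t²/2}·He_x(t)·He_y(t) dt` for `x, y ∈ ℕ`,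
where `He_n` is the probabilists' Hermite polynomial. -/
def discreteHermiteKernel (s : ℝ) (x y : ℕ) : ℝ :=
  (Real.sqrt (2 * Real.pi * (x ! : ℝ) * (y ! : ℝ)))⁻¹ *
    ∫ t in Set.Ioi s, Real.exp (-t ^ 2 / 2) * Polynomial.aeval t (Polynomial.hermite x) *
      Polynomial.aeval t (Polynomial.hermite y)

/-!
The square of the Vandermonde determinant turns the weight of `S` into the squared minor, with rows
indexed by `S`, of a matrix whose columns are the orthonormal Charlier functions. By Cauchy–Binet
the generating function `∑_S w ^ |S ∩ Y| * weight S` is then a determinant of size `|Y|`, and its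
leading coefficient as `w → ∞` gives the correlation function as a determinant of the Charlier
kernel.

Charlier polynomials are self-dual, `C_n(x; θ) = C_x(n; θ)`, so the kernel at `(x, y)` is the
pairing of the polynomials of the *fixed* degrees `x` and `y` against the Poisson weight truncated
to `{0, …, N - 1}`. Summation by parts reduces this pairing to lower degrees up to boundary terms,
exactly as integration by parts does for Hermite polynomials and the Gaussian weight on `(s, ∞)`.
The boundary terms converge by the three-term recurrence and Stirling's formula, and the remaining
entry `(0, 0)` by the central limit theorem for the Poisson distribution.
-/

section CauchyBinet

open Finset Matrix

variable {n α R : Type*} [Fintype n] [DecidableEq n] [CommRing R]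

theorem det_sum_smul_vecMulVec_eq_sum_injective [DecidableEq α] (T : Finset α) (z : α → R)
    (A B : α → n → R) :
    (∑ x ∈ T, z x • vecMulVec (A x) (B x)).det =
      ∑ f ∈ Fintype.piFinset (fun _ : n => T) with f.Injective,
        (∏ i, z (f i)) * ((∏ i, A (f i) i) * (of fun i => B (f i)).det) := by
  have rows : ∑ x ∈ T, z x • vecMulVec (A x) (B x) =
      of fun i => ∑ x ∈ T, (z x * A x i) • B x := by
    ext i j
    simp [Matrix.sum_apply, vecMulVec_apply, mul_assoc]
  have expand : (of fun i => ∑ x ∈ T, (z x * A x i) • B x).det =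
      ∑ f ∈ Fintype.piFinset fun _ : n => T,
        (∏ i, z (f i) * A (f i) i) * (of fun i => B (f i)).det :=
    (detRowAlternating.toMultilinearMap.map_sum_finset _ _).trans <|
      sum_congr rfl fun _ _ => detRowAlternating.toMultilinearMap.map_smul_univ _ _
  rw [rows, expand, sum_filter_of_ne]
  · exact sum_congr rfl fun f _ => by rw [prod_mul_distrib, mul_assoc]
  · intro f _ hne i j hij
    by_contra hi
    exact hne (by rw [det_zero_of_row_eq hi (congrArg B hij), mul_zero, mul_zero])

theorem filter_piFinset_image_eq [DecidableEq α] {S T : Finset α}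
    (hS : S ∈ T.powersetCard (Fintype.card n)) :
    {f ∈ {f ∈ Fintype.piFinset fun _ : n => T | f.Injective} | univ.image f = S} =
      {f ∈ Fintype.piFinset fun _ : n => S | f.Injective} := by
  obtain ⟨hST, hcard⟩ := mem_powersetCard.mp hS
  ext f
  simp only [mem_filter, Fintype.mem_piFinset]
  constructor
  · rintro ⟨⟨-, hf⟩, rfl⟩
    exact ⟨fun i => mem_image_of_mem f (mem_univ i), hf⟩
  · rintro ⟨hfS, hf⟩
    refine ⟨⟨fun i => hST (hfS i), hf⟩, eq_of_subset_of_card_le ?_ ?_⟩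
    · exact image_subset_iff.mpr fun i _ => hfS i
    · rw [hcard, card_image_of_injective _ hf, card_univ]

theorem det_sum_smul_vecMulVec (T : Finset α) (z : α → R) (A B : α → n → R) :
    (∑ x ∈ T, z x • vecMulVec (A x) (B x)).det =
      ∑ S ∈ T.powersetCard (Fintype.card n),
        (∏ x ∈ S, z x) * (∑ x ∈ S, vecMulVec (A x) (B x)).det := by
  classical
  have image_mem (f : n → α) (hf : f ∈ {f ∈ Fintype.piFinset fun _ : n => T | f.Injective}) :
      univ.image f ∈ T.powersetCard (Fintype.card n) := by
    obtain ⟨hfT, hinj⟩ := mem_filter.mp hf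
    refine mem_powersetCard.mpr ⟨image_subset_iff.mpr fun i _ => Fintype.mem_piFinset.mp hfT i, ?_⟩
    rw [card_image_of_injective _ hinj, card_univ]
  rw [det_sum_smul_vecMulVec_eq_sum_injective, ← sum_fiberwise_of_maps_to image_mem]
  refine sum_congr rfl fun S hS => ?_
  have det_S := det_sum_smul_vecMulVec_eq_sum_injective S 1 A B
  simp only [Pi.one_apply, one_smul, prod_const_one, one_mul] at det_S
  rw [det_S, ← filter_piFinset_image_eq hS, mul_sum]
  refine sum_congr rfl fun f hf => ?_
  obtain ⟨hfT, rfl⟩ := mem_filter.mp hf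
  rw [prod_image (mem_filter.mp hfT).2.injOn]

end CauchyBinet

section GramDet

open Finset Matrix

theorem tendsto_pow_card_inter_div_pow_card {α : Type*} [DecidableEq α] (S Y : Finset α) :
    Tendsto (fun w : ℝ => w ^ #(S ∩ Y) / w ^ #Y) atTop (𝓝 (if Y ⊆ S then 1 else 0)) := by
  split_ifs with hYS
  · rw [inter_eq_right.mpr hYS]
    exact tendsto_const_nhds.congr' ((eventually_gt_atTop 0).mono fun w hw =>
      (div_self (pow_pos hw _).ne').symm)
  · refine tendsto_pow_div_pow_atTop_zero (card_lt_card ?_)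
    exact ⟨inter_subset_right, fun h => hYS (h.trans inter_subset_left)⟩

variable {n α : Type*} [Fintype n] [DecidableEq n]

/-- The determinant of the Gram-type matrix `∑_{x ∈ S} A_x A_xᵀ`. When `S` has as many elements as
`n` it is the square of the minor of `A` with rows indexed by `S`, and so the unnormalized weight
of `S` in an orthogonal polynomial ensemble; this form needs no enumeration of `S`. -/
def gramDet (A : α → n → ℝ) (S : Finset α) : ℝ :=
  (∑ x ∈ S, vecMulVec (A x) (A x)).det

theorem gramDet_nonneg (A : α → n → ℝ) (S : Finset α) : 0 ≤ gramDet A S :=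
  (posSemidef_sum S fun x _ => posSemidef_vecMulVec_self_star (A x)).det_nonneg

theorem gramDet_map_univ (A : α → n → ℝ) (e : n ↪ α) :
    gramDet A (univ.map e) = (of fun i => A (e i)).det ^ 2 := by
  have sum_eq : ∑ x ∈ univ.map e, vecMulVec (A x) (A x) =
      (of fun i => A (e i))ᵀ * of fun i => A (e i) := by
    ext i j
    simp [Matrix.sum_apply, vecMulVec_apply, mul_apply]
  rw [gramDet, sum_eq, det_mul, det_transpose, sq]

theorem hasSum_prod_mul_gramDet {A : α → n → ℝ} {z : α → ℝ} (hz : ∀ x, 0 ≤ z x)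
    {M : Matrix n n ℝ} (hM : HasSum (fun x => z x • vecMulVec (A x) (A x)) M) :
    HasSum (fun S : {S : Finset α // S.card = Fintype.card n} =>
      (∏ x ∈ (S : Finset α), z x) * gramDet A S) M.det := by
  classical
  set term : {S : Finset α // S.card = Fintype.card n} → ℝ :=
    fun S => (∏ x ∈ (S : Finset α), z x) * gramDet A S
  have term_nonneg (S) : 0 ≤ term S :=
    mul_nonneg (prod_nonneg fun x _ => hz x) (gramDet_nonneg A S)
  let subsets (T : Finset α) : Finset {S : Finset α // S.card = Fintype.card n} :=
    T.powerset.subtype _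
  have tendsto_subsets : Tendsto subsets atTop atTop := by
    refine tendsto_atTop_finset_of_monotone (fun T U hTU => ?_) fun S => ⟨S, ?_⟩
    · exact subtype_mono (powerset_mono.mpr hTU)
    · exact mem_subtype.mpr (mem_powerset_self _)
  have sum_subsets (T : Finset α) :
      ∑ S ∈ subsets T, term S = (∑ x ∈ T, z x • vecMulVec (A x) (A x)).det := by
    rw [det_sum_smul_vecMulVec, powersetCard_eq_filter]
    exact sum_subtype_eq_sum_filter (fun S => (∏ x ∈ S, z x) * gramDet A S)
  have tendsto_det : Tendsto (fun T => ∑ S ∈ subsets T, term S) atTop (𝓝 M.det) := by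
    simp only [sum_subsets]
    exact (continuous_id.matrix_det.tendsto M).comp hM
  exact (tendsto_iff_tendsto_subseq_of_monotone (sum_mono_set_of_nonneg term_nonneg)
    tendsto_subsets).mpr tendsto_det

theorem hasSum_gramDet {A : α → n → ℝ} (hA : HasSum (fun x => vecMulVec (A x) (A x)) 1) :
    HasSum (fun S : {S : Finset α // S.card = Fintype.card n} => gramDet A S) 1 := by
  have h := hasSum_prod_mul_gramDet (A := A) (z := 1) (fun _ => zero_le_one)
    (by simpa only [Pi.one_apply, one_smul] using hA)
  simpa only [Pi.one_apply, prod_const_one, one_mul, det_one] using h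

variable {ι : Type*} [Fintype ι] [DecidableEq ι]

theorem hasSum_pow_card_inter_mul_gramDet [DecidableEq α] {A : α → n → ℝ}
    (hA : HasSum (fun x => vecMulVec (A x) (A x)) 1) (y : ι ↪ α) {w : ℝ} (hw : 0 ≤ w) :
    HasSum (fun S : {S : Finset α // S.card = Fintype.card n} =>
        w ^ #(S ∩ univ.map y) * gramDet A S)
      (1 + (w - 1) • of fun i j => A (y i) ⬝ᵥ A (y j)).det := by
  set B : Matrix ι n ℝ := of fun i => A (y i)
  let z (x : α) : ℝ := if x ∈ univ.map y then w else 1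
  have prod_z (S : Finset α) : ∏ x ∈ S, z x = w ^ #(S ∩ univ.map y) := by
    rw [prod_ite, prod_const, prod_const_one, mul_one, filter_mem_eq_inter]
  have hasSum_z : HasSum (fun x => z x • vecMulVec (A x) (A x)) (1 + (w - 1) • (Bᵀ * B)) := by
    have sum_image : ∑ x ∈ univ.map y, (z x - 1) • vecMulVec (A x) (A x) =
        (w - 1) • (Bᵀ * B) := by
      ext i j
      simp [z, B, Matrix.sum_apply, vecMulVec_apply, mul_apply, mul_sum]
    have hasSum_image : HasSum (fun x => (z x - 1) • vecMulVec (A x) (A x))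
        ((w - 1) • (Bᵀ * B)) := by
      rw [← sum_image]
      refine hasSum_sum_of_ne_finset_zero fun x hx => ?_
      rw [show z x = 1 from if_neg hx, sub_self, zero_smul]
    simpa only [sub_smul, one_smul, add_sub_cancel] using hA.add hasSum_image
  have gram_eq : (of fun i j => A (y i) ⬝ᵥ A (y j)) = B * Bᵀ := rfl
  have det_eq : (1 + (w - 1) • (Bᵀ * B)).det = (1 + (w - 1) • (B * Bᵀ)).det := by
    rw [← Matrix.smul_mul, det_one_add_mul_comm, Matrix.mul_smul]
  rw [gram_eq, ← det_eq]
  simpa only [prod_z] using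
    hasSum_prod_mul_gramDet (fun x => by simp only [z]; split_ifs <;> positivity) hasSum_z

theorem tendsto_tsum_pow_card_inter_div_mul_gramDet [DecidableEq α] {A : α → n → ℝ}
    (hA : HasSum (fun x => vecMulVec (A x) (A x)) 1) (y : ι ↪ α) :
    Tendsto (fun w : ℝ => ∑' S : {S : Finset α // S.card = Fintype.card n},
        w ^ #(S ∩ univ.map y) / w ^ #(univ.map y) * gramDet A S) atTop
      (𝓝 (of fun i j => A (y i) ⬝ᵥ A (y j)).det) := by
  set C : Matrix ι ι ℝ := of fun i j => A (y i) ⬝ᵥ A (y j)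
  have matrix_tendsto : Tendsto (fun w : ℝ => w⁻¹ • 1 + (1 - w⁻¹) • C) atTop (𝓝 C) := by
    simpa using (tendsto_inv_atTop_zero.smul_const (1 : Matrix ι ι ℝ)).add
      ((tendsto_inv_atTop_zero.const_sub (1 : ℝ)).smul_const C)
  refine ((continuous_id.matrix_det.tendsto C).comp matrix_tendsto).congr' ?_
  filter_upwards [eventually_gt_atTop 0] with w hw
  have matrix_eq : w⁻¹ • 1 + (1 - w⁻¹) • C = w⁻¹ • (1 + (w - 1) • C) := by
    rw [smul_add, smul_smul, mul_sub, inv_mul_cancel₀ hw.ne', mul_one]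
  have tsum_eq := ((hasSum_pow_card_inter_mul_gramDet hA y hw.le).mul_left
    ((w ^ #(univ.map y))⁻¹)).tsum_eq
  rw [Function.comp_apply, id_eq, matrix_eq, det_smul, inv_pow, ← card_univ, ← card_map y,
    ← tsum_eq]
  exact tsum_congr fun S => by ring

theorem hasSum_gramDet_of_forall_mem {A : α → n → ℝ}
    (hA : HasSum (fun x => vecMulVec (A x) (A x)) 1) (y : ι ↪ α) :
    HasSum (fun S : {S : Finset α // S.card = Fintype.card n ∧ ∀ i, y i ∈ S} => gramDet A S)
      (of fun i j => A (y i) ⬝ᵥ A (y j)).det := by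
  classical
  set g : {S : Finset α // S.card = Fintype.card n} → ℝ := fun S => gramDet A S
  set containing : Set {S : Finset α // S.card = Fintype.card n} := {S | ∀ i, y i ∈ S.1}
  have summable_g : Summable g := (hasSum_gramDet hA).summable
  have tendsto_indicator : Tendsto (fun w : ℝ => ∑' S : {S : Finset α // S.card = Fintype.card n},
      w ^ #(S ∩ univ.map y) / w ^ #(univ.map y) * g S) atTop
      (𝓝 (∑' S, containing.indicator g S)) := by
    refine tendsto_tsum_of_dominated_convergence summable_g (fun S => ?_) ?_
    · convert (tendsto_pow_card_inter_div_pow_card (S : Finset α) (univ.map y)).mul_const (g S)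
        using 2
      simp [containing, Set.indicator_apply, subset_iff]
    · filter_upwards [eventually_ge_atTop 1] with w hw S
      have hg : 0 ≤ g S := gramDet_nonneg A S
      rw [norm_mul, Real.norm_of_nonneg hg, Real.norm_of_nonneg (by positivity)]
      exact mul_le_of_le_one_left hg
        (div_le_one_of_le₀ (pow_le_pow_right₀ hw (card_le_card inter_subset_right)) (by positivity))
  have tsum_eq := tendsto_nhds_unique tendsto_indicator
    (tendsto_tsum_pow_card_inter_div_mul_gramDet hA y)
  have hasSum_containing : HasSum (g ∘ ((↑) : containing → _))
      (of fun i j => A (y i) ⬝ᵥ A (y j)).det := by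
    rw [hasSum_subtype_iff_indicator, ← tsum_eq]
    exact (summable_g.indicator containing).hasSum
  exact (Equiv.subtypeSubtypeEquivSubtypeInter _ _).hasSum_iff.mp hasSum_containing

end GramDet

section CharlierPolynomial

open Polynomial

variable {R : Type*} [CommRing R]

/-- The Charlier polynomials, orthogonal for the Poisson distribution with parameter `θ`. In terms
of the usual ones, `charlierPoly θ n = θ ^ n * C_n(X; θ)`; clearing the denominators makes the
leading coefficient `(-1) ^ n`. -/
def charlierPoly (θ : R) : ℕ → R[X]
  | 0 => 1
  | n + 1 => C θ * charlierPoly θ n - X * (charlierPoly θ n).comp (X - C 1)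

theorem charlierPoly_zero (θ : R) : charlierPoly θ 0 = 1 := rfl

theorem charlierPoly_succ (θ : R) (n : ℕ) :
    charlierPoly θ (n + 1) = C θ * charlierPoly θ n - X * (charlierPoly θ n).comp (X - C 1) := rfl

theorem eval_charlierPoly_succ (θ x : R) (n : ℕ) :
    (charlierPoly θ (n + 1)).eval x =
      θ * (charlierPoly θ n).eval x - x * (charlierPoly θ n).eval (x - 1) := by
  simp [charlierPoly_succ]

theorem eval_charlierPoly_zero (θ : R) (n : ℕ) : (charlierPoly θ n).eval 0 = θ ^ n := by
  induction n with
  | zero => simp [charlierPoly_zero]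
  | succ n ih => rw [eval_charlierPoly_succ, ih, zero_mul, sub_zero, pow_succ']

theorem eval_charlierPoly_succ_add_one (θ : R) (n : ℕ) (x : R) :
    (charlierPoly θ (n + 1)).eval (x + 1) =
      (charlierPoly θ (n + 1)).eval x - (n + 1) * (charlierPoly θ n).eval x := by
  induction n generalizing x with
  | zero =>
    simp only [zero_add, charlierPoly_succ, charlierPoly_zero, mul_one, map_one, one_comp, eval_sub,
      eval_C, eval_X, Nat.cast_zero, eval_one]
    ring
  | succ n ih =>
    have ih_pred := ih (x - 1)
    rw [sub_add_cancel] at ih_pred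
    rw [eval_charlierPoly_succ θ (x + 1), eval_charlierPoly_succ θ x (n + 1), add_sub_cancel_right,
      ih x]
    have step := eval_charlierPoly_succ θ x n
    push_cast
    linear_combination (n + 1) * step - x * ih_pred

theorem eval_charlierPoly_add_two (θ x : R) (n : ℕ) :
    (charlierPoly θ (n + 2)).eval x =
      (θ - x + (n + 1)) * (charlierPoly θ (n + 1)).eval x -
        (n + 1) * θ * (charlierPoly θ n).eval x := by
  have shift := eval_charlierPoly_succ_add_one θ n (x - 1)
  rw [sub_add_cancel] at shift
  rw [eval_charlierPoly_succ θ x (n + 1)]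
  linear_combination x * shift - (n + 1) * eval_charlierPoly_succ θ x n

theorem pow_mul_eval_charlierPoly_comm (θ : R) (n x : ℕ) :
    θ ^ x * (charlierPoly θ n).eval (x : R) = θ ^ n * (charlierPoly θ x).eval (n : R) := by
  induction n generalizing x with
  | zero => simp [charlierPoly_zero, eval_charlierPoly_zero]
  | succ n ih =>
    cases x with
    | zero => simp [charlierPoly_zero, eval_charlierPoly_zero]
    | succ x =>
      have ih_succ := ih (x + 1)
      push_cast at ih_succ ⊢
      rw [eval_charlierPoly_succ, eval_charlierPoly_succ_add_one, add_sub_cancel_right]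
      linear_combination θ * ih_succ - (x + 1) * θ * ih x

theorem isMonicOfDegree_C_neg_one_pow_mul_charlierPoly [Nontrivial R] (θ : R) (n : ℕ) :
    IsMonicOfDegree (C ((-1) ^ n) * charlierPoly θ n) n := by
  induction n with
  | zero => simp [charlierPoly_zero]
  | succ n ih =>
    have step : C ((-1) ^ (n + 1)) * charlierPoly θ (n + 1) =
        X * (C ((-1) ^ n) * charlierPoly θ n).comp (X - C 1) -
          C θ * (C ((-1) ^ n) * charlierPoly θ n) := by
      simp only [charlierPoly_succ, pow_succ, mul_comp, C_comp, C_mul, C_neg, C_1]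
      ring
    rw [step, add_comm n]
    refine ((isMonicOfDegree_X R).mul ?_).sub ?_
    · simpa using ih.comp one_ne_zero (isMonicOfDegree_X_sub_one 1)
    · exact (natDegree_C_mul_le _ _).trans_lt (by rw [ih.natDegree_eq]; omega)

end CharlierPolynomial

section PoissonOrthogonality

open Finset Polynomial

/-- The mass `exp (-θ) * θ ^ x / x!` of the Poisson distribution with real parameter `θ`, which is
the orthogonality weight of the Charlier polynomials. -/
def poissonWeight (θ : ℝ) (x : ℕ) : ℝ :=
  Real.exp (-θ) * θ ^ x / (x ! : ℝ)

theorem poissonWeight_pos {θ : ℝ} (hθ : 0 < θ) (x : ℕ) : 0 < poissonWeight θ x := by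
  unfold poissonWeight
  positivity

theorem succ_mul_poissonWeight_succ (θ : ℝ) (x : ℕ) :
    (x + 1) * poissonWeight θ (x + 1) = θ * poissonWeight θ x := by
  simp only [poissonWeight, Nat.factorial_succ, Nat.cast_mul, Nat.cast_add_one]
  field_simp
  ring

theorem hasSum_poissonWeight (θ : ℝ) : HasSum (poissonWeight θ) 1 := by
  have h := (NormedSpace.expSeries_div_hasSum_exp θ).mul_left (Real.exp (-θ))
  rw [← Real.exp_eq_exp_ℝ, ← Real.exp_add, neg_add_cancel, Real.exp_zero] at h
  simp only [← mul_div_assoc] at h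
  exact h

theorem summable_poissonWeight_mul_eval (θ : ℝ) (p : ℝ[X]) :
    Summable fun x : ℕ => poissonWeight θ x * p.eval (x : ℝ) := by
  have summable_pow (k : ℕ) : Summable fun x : ℕ => poissonWeight θ x * (x : ℝ) ^ k := by
    have dominated := (Asymptotics.isBigO_refl (poissonWeight θ) atTop).mul
      (isLittleO_pow_const_const_pow_of_one_lt (R := ℝ) k one_lt_two).isBigO
    refine summable_of_isBigO_nat ?_ dominated
    refine ((Real.summable_pow_div_factorial (θ * 2)).mul_left (Real.exp (-θ))).congr fun x => ?_
    rw [poissonWeight, mul_pow]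
    ring
  simp only [eval_eq_sum_range, mul_sum, mul_left_comm (poissonWeight θ _)]
  exact summable_sum fun k _ => (summable_pow k).mul_left _

theorem sum_range_poissonWeight_mul_charlierPoly_succ (θ : ℝ) (n : ℕ) (g : ℕ → ℝ) (N : ℕ) :
    ∑ j ∈ range N, poissonWeight θ j * (charlierPoly θ (n + 1)).eval (j : ℝ) * g j =
      θ * ∑ j ∈ range N, poissonWeight θ j * (charlierPoly θ n).eval (j : ℝ) * (g j - g (j + 1)) +
        N * poissonWeight θ N * (charlierPoly θ n).eval (N - 1 : ℝ) * g N := by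
  induction N with
  | zero => simp
  | succ N ih =>
    rw [sum_range_succ, ih, sum_range_succ, eval_charlierPoly_succ]
    push_cast
    rw [add_sub_cancel_right, succ_mul_poissonWeight_succ]
    ring

/-- The pairing of the Charlier polynomials of degrees `n` and `m` against the Poisson weight
truncated to `{0, …, N - 1}`. -/
def truncatedCharlierPairing (θ : ℝ) (N n m : ℕ) : ℝ :=
  ∑ j ∈ range N, poissonWeight θ j * (charlierPoly θ n).eval (j : ℝ) *
    (charlierPoly θ m).eval (j : ℝ)

theorem truncatedCharlierPairing_comm (θ : ℝ) (N n m : ℕ) :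
    truncatedCharlierPairing θ N n m = truncatedCharlierPairing θ N m n :=
  sum_congr rfl fun _ _ => mul_right_comm _ _ _

theorem truncatedCharlierPairing_zero_zero (θ : ℝ) (N : ℕ) :
    truncatedCharlierPairing θ N 0 0 = ∑ j ∈ range N, poissonWeight θ j := by
  simp [truncatedCharlierPairing, charlierPoly_zero]

theorem truncatedCharlierPairing_succ_zero (θ : ℝ) (N n : ℕ) :
    truncatedCharlierPairing θ N (n + 1) 0 =
      N * poissonWeight θ N * (charlierPoly θ n).eval (N - 1 : ℝ) := by
  simpa [truncatedCharlierPairing, charlierPoly_zero] using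
    sum_range_poissonWeight_mul_charlierPoly_succ θ n 1 N

theorem truncatedCharlierPairing_succ_succ (θ : ℝ) (N n m : ℕ) :
    truncatedCharlierPairing θ N (n + 1) (m + 1) =
      (m + 1) * θ * truncatedCharlierPairing θ N n m +
        N * poissonWeight θ N * (charlierPoly θ n).eval (N - 1 : ℝ) *
          (charlierPoly θ (m + 1)).eval (N : ℝ) := by
  have difference (j : ℕ) : (charlierPoly θ (m + 1)).eval (j : ℝ) -
      (charlierPoly θ (m + 1)).eval ((j + 1 : ℕ) : ℝ) =
        (m + 1) * (charlierPoly θ m).eval (j : ℝ) := by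
    rw [Nat.cast_add_one, eval_charlierPoly_succ_add_one]
    ring
  rw [truncatedCharlierPairing, sum_range_poissonWeight_mul_charlierPoly_succ θ n
    fun j => (charlierPoly θ (m + 1)).eval (j : ℝ)]
  simp only [difference, truncatedCharlierPairing, mul_sum]
  congr 1
  exact sum_congr rfl fun j _ => by ring

theorem tendsto_mul_poissonWeight_mul_eval (θ : ℝ) (p q : ℝ[X]) :
    Tendsto (fun N : ℕ => N * poissonWeight θ N * p.eval (N - 1 : ℝ) * q.eval (N : ℝ)) atTop
      (𝓝 0) := by
  have h := (summable_poissonWeight_mul_eval θ (X * p.comp (X - 1) * q)).tendsto_atTop_zero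
  refine h.congr fun N => ?_
  simp only [eval_mul, eval_X, eval_comp, eval_sub, eval_one]
  ring

theorem tendsto_truncatedCharlierPairing (θ : ℝ) (n m : ℕ) :
    Tendsto (fun N => truncatedCharlierPairing θ N n m) atTop
      (𝓝 (if n = m then (n ! : ℝ) * θ ^ n else 0)) := by
  have succ_zero (n : ℕ) :
      Tendsto (fun N => truncatedCharlierPairing θ N (n + 1) 0) atTop (𝓝 0) := by
    simpa [truncatedCharlierPairing_succ_zero] using
      tendsto_mul_poissonWeight_mul_eval θ (charlierPoly θ n) 1
  induction n generalizing m with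
  | zero =>
    cases m with
    | zero =>
      simpa [truncatedCharlierPairing_zero_zero] using (hasSum_poissonWeight θ).tendsto_sum_nat
    | succ m => simpa [truncatedCharlierPairing_comm θ _ 0] using succ_zero m
  | succ n ih =>
    cases m with
    | zero => simpa using succ_zero n
    | succ m =>
      simp only [truncatedCharlierPairing_succ_succ]
      convert ((ih m).const_mul ((m + 1) * θ)).add
        (tendsto_mul_poissonWeight_mul_eval θ (charlierPoly θ n) (charlierPoly θ (m + 1))) using 2
      rcases eq_or_ne n m with rfl | hnm
      · simp only [↓reduceIte, Nat.factorial_succ, Nat.cast_mul,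
          Nat.cast_add, Nat.cast_one, pow_succ, add_zero]
        ring
      · simp [hnm]

theorem hasSum_poissonWeight_mul_charlierPoly_mul_charlierPoly (θ : ℝ) (n m : ℕ) :
    HasSum (fun x : ℕ => poissonWeight θ x * (charlierPoly θ n).eval (x : ℝ) *
      (charlierPoly θ m).eval (x : ℝ)) (if n = m then (n ! : ℝ) * θ ^ n else 0) := by
  have summable := summable_poissonWeight_mul_eval θ (charlierPoly θ n * charlierPoly θ m)
  simp only [eval_mul, ← mul_assoc] at summable
  exact summable.hasSum_iff_tendsto_nat.mpr (tendsto_truncatedCharlierPairing θ n m)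

/-- The Charlier functions: the orthonormal family in `ℓ²(ℕ)` obtained from the Charlier polynomials
by absorbing the square root of the Poisson weight. -/
def charlierFunction (θ : ℝ) (n x : ℕ) : ℝ :=
  √(poissonWeight θ x) * (charlierPoly θ n).eval (x : ℝ) / √((n ! : ℝ) * θ ^ n)

theorem charlierFunction_comm {θ : ℝ} (hθ : 0 < θ) (n x : ℕ) :
    charlierFunction θ n x = charlierFunction θ x n := by
  have sqrt_poissonWeight (x : ℕ) :
      √(poissonWeight θ x) = √(Real.exp (-θ)) * θ ^ x / √((x ! : ℝ) * θ ^ x) := by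
    have weight_eq : poissonWeight θ x = Real.exp (-θ) * (θ ^ x) ^ 2 / ((x ! : ℝ) * θ ^ x) := by
      rw [poissonWeight]
      field_simp
    rw [weight_eq, Real.sqrt_div (by positivity), Real.sqrt_mul (by positivity),
      Real.sqrt_sq (by positivity)]
  simp only [charlierFunction, sqrt_poissonWeight]
  linear_combination √(Real.exp (-θ)) / (√((x ! : ℝ) * θ ^ x) * √((n ! : ℝ) * θ ^ n)) *
    pow_mul_eval_charlierPoly_comm θ n x

theorem charlierFunction_mul_charlierFunction {θ : ℝ} (hθ : 0 < θ) (n m x : ℕ) :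
    charlierFunction θ n x * charlierFunction θ m x =
      poissonWeight θ x * (charlierPoly θ n).eval (x : ℝ) * (charlierPoly θ m).eval (x : ℝ) /
        (√((n ! : ℝ) * θ ^ n) * √((m ! : ℝ) * θ ^ m)) := by
  rw [charlierFunction, charlierFunction, div_mul_div_comm, mul_mul_mul_comm,
    Real.mul_self_sqrt (poissonWeight_pos hθ x).le, mul_assoc (poissonWeight θ x)]

theorem hasSum_charlierFunction_mul_charlierFunction {θ : ℝ} (hθ : 0 < θ) (n m : ℕ) :
    HasSum (fun x => charlierFunction θ n x * charlierFunction θ m x) (if n = m then 1 else 0) := by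
  have value : (if n = m then 1 else 0) = (if n = m then (n ! : ℝ) * θ ^ n else 0) /
      (√((n ! : ℝ) * θ ^ n) * √((m ! : ℝ) * θ ^ m)) := by
    rcases eq_or_ne n m with rfl | hnm
    · have norm_pos : 0 < (n ! : ℝ) * θ ^ n := by positivity
      rw [if_pos rfl, if_pos rfl, Real.mul_self_sqrt norm_pos.le, div_self norm_pos.ne']
    · rw [if_neg hnm, if_neg hnm, zero_div]
  simp only [charlierFunction_mul_charlierFunction hθ, value]
  exact (hasSum_poissonWeight_mul_charlierPoly_mul_charlierPoly θ n m).div_const _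

/-- The correlation kernel of the `N`-particle Charlier ensemble: the orthogonal projection in
`ℓ²(ℕ)` onto the span of the first `N` Charlier functions. -/
def charlierKernel (θ : ℝ) (N x y : ℕ) : ℝ :=
  ∑ n ∈ range N, charlierFunction θ n x * charlierFunction θ n y

theorem charlierKernel_eq_truncatedCharlierPairing_div {θ : ℝ} (hθ : 0 < θ) (N x y : ℕ) :
    charlierKernel θ N x y =
      truncatedCharlierPairing θ N x y / (√((x ! : ℝ) * θ ^ x) * √((y ! : ℝ) * θ ^ y)) := by
  rw [charlierKernel, truncatedCharlierPairing, sum_div]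
  refine sum_congr rfl fun n _ => ?_
  rw [charlierFunction_comm hθ n x, charlierFunction_comm hθ n y,
    charlierFunction_mul_charlierFunction hθ]

end PoissonOrthogonality

section CharlierEnsemble

open Finset Matrix

theorem charlierWeight_map_orderEmbedding (θ : ℝ) {N : ℕ} (e : Fin N ↪o ℕ) :
    charlierWeight θ (univ.map e.toEmbedding) =
      (∏ i, θ ^ e i / ((e i) ! : ℝ)) * (vandermonde fun i => (e i : ℝ)).det ^ 2 := by
  have filter_lt (i : Fin N) :
      {y ∈ univ.map e.toEmbedding | e i < y} = (Ioi i).map e.toEmbedding := by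
    rw [filter_map, ← filter_lt_eq_Ioi]
    congr 1
    ext j
    simp
  rw [charlierWeight, det_vandermonde]
  simp [filter_lt, prod_pow]

theorem det_charlierFunction_sq {θ : ℝ} (hθ : 0 < θ) {N : ℕ} (v : Fin N → ℕ) :
    (of fun i j : Fin N => charlierFunction θ j (v i)).det ^ 2 =
      (∏ i, poissonWeight θ (v i)) * (∏ j : Fin N, ((j : ℕ) ! * θ ^ (j : ℕ))⁻¹) *
        (vandermonde fun i => (v i : ℝ)).det ^ 2 := by
  let monicPoly (j : Fin N) : Polynomial ℝ := Polynomial.C ((-1) ^ (j : ℕ)) * charlierPoly θ j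
  have factor : (of fun i j : Fin N => charlierFunction θ j (v i)) =
      of fun i j => √(poissonWeight θ (v i)) *
        (of fun i j : Fin N => (-1) ^ (j : ℕ) / √((j : ℕ) ! * θ ^ (j : ℕ)) *
          (of fun i j => (monicPoly j).eval (v i : ℝ)) i j) i j := by
    ext i j
    have sign_sq : ((-1 : ℝ) ^ (j : ℕ)) * (-1) ^ (j : ℕ) = 1 := by
      rw [← mul_pow, neg_one_mul, neg_neg, one_pow]
    simp only [of_apply, charlierFunction, monicPoly, Polynomial.eval_mul, Polynomial.eval_C]
    linear_combination -√(poissonWeight θ (v i)) / √((j : ℕ) ! * θ ^ (j : ℕ)) *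
      (charlierPoly θ j).eval (v i : ℝ) * sign_sq
  have isMonic (j : Fin N) := isMonicOfDegree_C_neg_one_pow_mul_charlierPoly θ (j : ℕ)
  rw [factor, det_mul_column, det_mul_row, ← det_eval_matrixOfPolynomials_eq_det_vandermonde _ _
    (fun j => (isMonic j).natDegree_eq) fun j => (isMonic j).monic, mul_pow, mul_pow, ← prod_pow,
    ← prod_pow, ← mul_assoc]
  congr 3
  · exact funext fun i => Real.sq_sqrt (poissonWeight_pos hθ _).le
  · ext j
    rw [div_pow, Real.sq_sqrt (by positivity), ← pow_mul, mul_comm _ 2, pow_mul, neg_one_sq,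
      one_pow, one_div]

theorem gramDet_charlierFunction {θ : ℝ} (hθ : 0 < θ) {N : ℕ} {S : Finset ℕ} (hS : S.card = N) :
    gramDet (fun x (j : Fin N) => charlierFunction θ j x) S =
      (∏ j : Fin N, Real.exp (-θ) / ((j : ℕ) ! * θ ^ (j : ℕ))) * charlierWeight θ S := by
  have weight_eq : charlierWeight θ S =
      (∏ i, θ ^ S.orderEmbOfFin hS i / ((S.orderEmbOfFin hS i) ! : ℝ)) *
        (vandermonde fun i => (S.orderEmbOfFin hS i : ℝ)).det ^ 2 := by
    rw [← charlierWeight_map_orderEmbedding, map_orderEmbOfFin_univ]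
  have gram_eq : gramDet (fun x (j : Fin N) => charlierFunction θ j x) S =
      (of fun i j : Fin N => charlierFunction θ j (S.orderEmbOfFin hS i)).det ^ 2 := by
    conv_lhs => rw [← map_orderEmbOfFin_univ S hS]
    exact gramDet_map_univ _ _
  rw [gram_eq, weight_eq, det_charlierFunction_sq hθ, ← mul_assoc]
  simp only [poissonWeight, ← prod_mul_distrib]
  congr 2
  ext i
  ring

theorem hasSum_vecMulVec_charlierFunction {θ : ℝ} (hθ : 0 < θ) (N : ℕ) :
    HasSum (fun x => vecMulVec (fun j : Fin N => charlierFunction θ j x)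
      fun j : Fin N => charlierFunction θ j x) 1 := by
  refine Pi.hasSum.mpr fun i => Pi.hasSum.mpr fun j => ?_
  simpa only [vecMulVec_apply, one_apply, Fin.ext_iff] using
    hasSum_charlierFunction_mul_charlierFunction hθ i j

theorem charlier_correlation_eq_det_charlierKernel {θ : ℝ} (hθ : 0 < θ) (N : ℕ) {ι : Type*}
    [Fintype ι] [DecidableEq ι] (y : ι ↪ ℕ) :
    (∑' S : {S : Finset ℕ // S.card = N ∧ ∀ i, y i ∈ S}, charlierWeight θ S) /
        ∑' S : {S : Finset ℕ // S.card = N}, charlierWeight θ S =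
      (of fun i j => charlierKernel θ N (y i) (y j)).det := by
  set A : ℕ → Fin N → ℝ := fun x j => charlierFunction θ j x
  set c : ℝ := ∏ j : Fin N, Real.exp (-θ) / ((j : ℕ) ! * θ ^ (j : ℕ))
  have hc : c ≠ 0 := prod_ne_zero_iff.mpr fun j _ => by positivity
  have orthonormal : HasSum (fun x => vecMulVec (A x) (A x)) 1 :=
    hasSum_vecMulVec_charlierFunction hθ N
  have partition : c * ∑' S : {S : Finset ℕ // S.card = N}, charlierWeight θ S = 1 := by
    rw [← tsum_mul_left, ← (hasSum_gramDet orthonormal).tsum_eq, Fintype.card_fin]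
    exact tsum_congr fun S => (gramDet_charlierFunction hθ S.2).symm
  have numerator : c * ∑' S : {S : Finset ℕ // S.card = N ∧ ∀ i, y i ∈ S}, charlierWeight θ S =
      (of fun i j => charlierKernel θ N (y i) (y j)).det := by
    have kernel_eq : (of fun i j => charlierKernel θ N (y i) (y j)) =
        of fun i j => A (y i) ⬝ᵥ A (y j) := by
      ext i j
      exact (Fin.sum_univ_eq_sum_range
        (fun n => charlierFunction θ n (y i) * charlierFunction θ n (y j)) N).symm
    rw [← tsum_mul_left, kernel_eq,
      ← (hasSum_gramDet_of_forall_mem orthonormal y).tsum_eq, Fintype.card_fin]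
    exact tsum_congr fun S => (gramDet_charlierFunction hθ S.2.1).symm
  rw [← mul_div_mul_left _ _ hc, numerator, partition, div_one]

end CharlierEnsemble

section HermiteKernel

open MeasureTheory Polynomial

theorem derivative_hermite_succ (n : ℕ) :
    derivative (hermite (n + 1)) = ((n : ℤ[X]) + 1) * hermite n := by
  induction n with
  | zero => simp
  | succ n ih =>
    rw [hermite_succ (n + 1), derivative_sub, derivative_mul, ih, derivative_X, derivative_mul]
    simp only [derivative_add, derivative_natCast, derivative_one]
    push_cast
    linear_combination (-(n : ℤ[X]) - 1) * hermite_succ n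

theorem aeval_hermite_add_two (n : ℕ) (t : ℝ) :
    aeval t (hermite (n + 2)) =
      t * aeval t (hermite (n + 1)) - (n + 1) * aeval t (hermite n) := by
  rw [hermite_succ (n + 1), derivative_hermite_succ]
  simp

section GaussianWeight

variable {R : Type*} [CommRing R] [Algebra R ℝ]

theorem integrable_exp_neg_sq_mul_aeval (p : R[X]) :
    Integrable fun t : ℝ => Real.exp (-t ^ 2 / 2) * aeval t p := by
  induction p using Polynomial.induction_on' with
  | add p q hp hq => simpa only [map_add, mul_add] using! hp.add hq
  | monomial n a =>
    have hn : (-1 : ℝ) < n := neg_one_lt_zero.trans_le n.cast_nonneg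
    convert (integrable_rpow_mul_exp_neg_mul_sq one_half_pos hn).const_mul (algebraMap R ℝ a)
      using 2 with t
    rw [aeval_monomial, Real.rpow_natCast, neg_mul, one_div_mul_eq_div, neg_div]
    ring

theorem integral_Ioi_exp_neg_sq_mul_aeval (p : R[X]) (s : ℝ) :
    ∫ t in Set.Ioi s, Real.exp (-t ^ 2 / 2) * aeval t (X * p - derivative p) =
      Real.exp (-s ^ 2 / 2) * aeval s p := by
  have hasDerivAt (t : ℝ) : HasDerivAt (fun t : ℝ => -(Real.exp (-t ^ 2 / 2) * aeval t p))
      (Real.exp (-t ^ 2 / 2) * aeval t (X * p - derivative p)) t := by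
    have exponent : HasDerivAt (fun t : ℝ => -t ^ 2 / 2) (-t) t :=
      ((hasDerivAt_pow 2 t).neg.div_const 2).congr_deriv (by ring)
    refine (exponent.exp.mul (p.hasDerivAt_aeval t)).neg.congr_deriv ?_
    rw [map_sub, map_mul, aeval_X]
    ring
  have integrable := (integrable_exp_neg_sq_mul_aeval (X * p - derivative p)).integrableOn
    (s := Set.Ioi s)
  have tendsto_zero := tendsto_zero_of_hasDerivAt_of_integrableOn_Ioi (fun t _ => hasDerivAt t)
    integrable (integrable_exp_neg_sq_mul_aeval p).neg.integrableOn
  rw [integral_Ioi_of_hasDerivAt_of_tendsto' (fun t _ => hasDerivAt t) integrable tendsto_zero,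
    zero_sub, neg_neg]

end GaussianWeight

/-- The pairing of the Hermite polynomials of degrees `n` and `m` against the standard Gaussian
density truncated to `(s, ∞)`. -/
def truncatedHermitePairing (s : ℝ) (n m : ℕ) : ℝ :=
  (√(2 * Real.pi))⁻¹ *
    ∫ t in Set.Ioi s, Real.exp (-t ^ 2 / 2) * aeval t (hermite n) * aeval t (hermite m)

theorem discreteHermiteKernel_eq_truncatedHermitePairing_div (s : ℝ) (x y : ℕ) :
    discreteHermiteKernel s x y =
      truncatedHermitePairing s x y / (√(x ! : ℝ) * √(y ! : ℝ)) := by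
  rw [discreteHermiteKernel, truncatedHermitePairing, Real.sqrt_mul (by positivity),
    Real.sqrt_mul (by positivity), mul_inv, mul_inv]
  ring

theorem truncatedHermitePairing_comm (s : ℝ) (n m : ℕ) :
    truncatedHermitePairing s n m = truncatedHermitePairing s m n := by
  simp only [truncatedHermitePairing, mul_right_comm]

theorem truncatedHermitePairing_zero_zero (s : ℝ) :
    truncatedHermitePairing s 0 0 =
      (√(2 * Real.pi))⁻¹ * ∫ t in Set.Ioi s, Real.exp (-t ^ 2 / 2) := by
  simp [truncatedHermitePairing]

theorem truncatedHermitePairing_succ_zero (s : ℝ) (n : ℕ) :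
    truncatedHermitePairing s (n + 1) 0 =
      (√(2 * Real.pi))⁻¹ * Real.exp (-s ^ 2 / 2) * aeval s (hermite n) := by
  rw [mul_assoc, ← integral_Ioi_exp_neg_sq_mul_aeval, ← hermite_succ]
  simp [truncatedHermitePairing]

theorem truncatedHermitePairing_succ_succ (s : ℝ) (n m : ℕ) :
    truncatedHermitePairing s (n + 1) (m + 1) =
      (m + 1) * truncatedHermitePairing s n m +
        (√(2 * Real.pi))⁻¹ * Real.exp (-s ^ 2 / 2) * aeval s (hermite n) *
          aeval s (hermite (m + 1)) := by
  have integrand (t : ℝ) :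
      Real.exp (-t ^ 2 / 2) * aeval t (hermite (n + 1)) * aeval t (hermite (m + 1)) =
        (m + 1) * (Real.exp (-t ^ 2 / 2) * aeval t (hermite n) * aeval t (hermite m)) +
          Real.exp (-t ^ 2 / 2) * aeval t (X * (hermite n * hermite (m + 1)) -
            derivative (hermite n * hermite (m + 1))) := by
    rw [derivative_mul, derivative_hermite_succ, hermite_succ n]
    simp only [map_sub, map_add, map_mul, aeval_X, map_natCast, map_one]
    ring
  have integrable := integrable_exp_neg_sq_mul_aeval (hermite n * hermite m)
  simp only [map_mul, ← mul_assoc] at integrable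
  simp only [truncatedHermitePairing, integrand]
  rw [integral_add (integrable.const_mul _).integrableOn
    (integrable_exp_neg_sq_mul_aeval _).integrableOn, integral_const_mul,
    integral_Ioi_exp_neg_sq_mul_aeval, map_mul]
  ring

end HermiteKernel

section SecondOrderTaylor

open Asymptotics

theorem tendsto_mul_of_isLittleO_sq {ι 𝕜 : Type*} [NormedField 𝕜] {l : Filter ι} {f : 𝕜 → 𝕜}
    {c z : ι → 𝕜} {q a : 𝕜} (hf : (fun w => f w - q * w ^ 2) =o[𝓝 0] fun w => w ^ 2)
    (hz : Tendsto z l (𝓝 0)) (hcz : Tendsto (fun i => c i * z i ^ 2) l (𝓝 a)) :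
    Tendsto (fun i => c i * f (z i)) l (𝓝 (q * a)) := by
  have remainder : Tendsto (fun i => c i * (f (z i) - q * z i ^ 2)) l (𝓝 0) :=
    (isLittleO_one_iff 𝕜).mp <|
      ((isBigO_refl c l).mul_isLittleO (hf.comp_tendsto hz)).trans_isBigO (hcz.isBigO_one 𝕜)
  simpa only [add_zero] using! ((hcz.const_mul q).add remainder).congr fun i => by ring

theorem log_one_add_sub_isLittleO_sq :
    (fun x : ℝ => Real.log (1 + x) - x - -1 / 2 * x ^ 2) =o[𝓝 0] fun x => x ^ 2 := by
  refine IsBigO.trans_isLittleO (g := fun x : ℝ => x ^ 3) (.of_bound 2 ?_)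
    (isLittleO_pow_pow (by norm_num))
  filter_upwards [Metric.ball_mem_nhds (0 : ℝ) one_half_pos] with x hx
  rw [mem_ball_zero_iff, Real.norm_eq_abs] at hx
  have taylor := Real.abs_log_sub_add_sum_range_le (x := -x) (by rw [abs_neg]; linarith) 2
  simp only [Finset.sum_range_succ, Finset.sum_range_zero, abs_neg, sub_neg_eq_add] at taylor
  calc ‖Real.log (1 + x) - x - -1 / 2 * x ^ 2‖
    _ ≤ |x| ^ 3 / (1 - |x|) := by
      convert! taylor using 2
      norm_num
      ring
    _ ≤ |x| ^ 3 / (1 / 2) := by gcongr; linarith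
    _ = 2 * ‖x ^ 3‖ := by rw [norm_pow, Real.norm_eq_abs]; ring

theorem exp_sub_one_sub_isLittleO_sq :
    (fun z : ℂ => Complex.exp z - 1 - z - 1 / 2 * z ^ 2) =o[𝓝 0] fun z => z ^ 2 := by
  refine ((Complex.exp_sub_sum_range_isBigO_pow 3).congr_left fun z => ?_).trans_isLittleO
    (isLittleO_pow_pow (by norm_num))
  norm_num [Finset.sum_range_succ, Nat.factorial]
  ring

end SecondOrderTaylor

section PoissonCentralLimit

open MeasureTheory ProbabilityTheory
open scoped NNReal

variable {r : ℕ → ℝ≥0} {a : ℕ → ℝ} {s : ℝ}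

theorem charFun_map_poissonMeasure_affine (r : ℝ≥0) (a c t : ℝ) :
    charFun ((poissonMeasure r).map fun n : ℕ => c * ((n : ℝ) - a)) t =
      Complex.exp (↑(t * (c * (r - a))) * Complex.I +
        r * (Complex.exp (↑(c * t) * Complex.I) - 1 - ↑(c * t) * Complex.I)) := by
  have shift : (poissonMeasure r).map (fun n : ℕ => (n : ℝ) - a) =
      ((poissonMeasure r).map Nat.cast).map (· + -a) := by
    rw [Measure.map_map (by fun_prop) (by fun_prop)]
    rfl
  rw [charFun_map_mul_comp (by fun_prop), shift, charFun_map_add_const,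
    charFun_map_cast_poissonMeasure, ← Complex.exp_add, Real.inner_apply]
  congr 1
  push_cast
  ring

theorem tendsto_charFun_poissonMeasure_gaussianReal (hr : Tendsto r atTop atTop)
    (ha : Tendsto (fun N => (r N - a N) / √(r N : ℝ)) atTop (𝓝 s)) (t : ℝ) :
    Tendsto (fun N => charFun ((poissonMeasure (r N)).map
        fun n : ℕ => (√(r N : ℝ))⁻¹ * ((n : ℝ) - a N)) t)
      atTop (𝓝 (charFun (gaussianReal s 1) t)) := by
  have hr_real : Tendsto (fun N => (r N : ℝ)) atTop atTop := NNReal.tendsto_coe_atTop.mpr hr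
  have frequency : Tendsto (fun N => ((√(r N : ℝ))⁻¹ * t : ℝ) * Complex.I) atTop (𝓝 0) := by
    have h : Tendsto (fun N => (√(r N : ℝ))⁻¹ * t) atTop (𝓝 (0 * t)) :=
      (Real.tendsto_sqrt_atTop.comp hr_real).inv_tendsto_atTop.mul_const t
    simpa using (Complex.continuous_ofReal.tendsto _).comp h |>.mul_const Complex.I
  have variance : Tendsto (fun N => (r N : ℂ) * (((√(r N : ℝ))⁻¹ * t : ℝ) * Complex.I) ^ 2) atTop
      (𝓝 (-t ^ 2)) := by
    refine tendsto_const_nhds.congr' ?_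
    filter_upwards [hr_real.eventually_gt_atTop 0] with N hN
    have sq : (r N : ℝ) * ((√(r N : ℝ))⁻¹ * t) ^ 2 = t ^ 2 := by
      rw [mul_pow, inv_pow, Real.sq_sqrt hN.le, mul_inv_cancel_left₀ hN.ne']
    rw [mul_pow, Complex.I_sq, mul_neg_one, mul_neg]
    exact_mod_cast congrArg (fun x : ℝ => (-x : ℂ)) sq.symm
  have exponent := (((Complex.continuous_ofReal.tendsto _).comp (ha.const_mul t)).mul_const
    Complex.I).add (tendsto_mul_of_isLittleO_sq exp_sub_one_sub_isLittleO_sq frequency variance)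
  rw [charFun_gaussianReal]
  convert! exponent.cexp using 2 with N
  · rw [charFun_map_poissonMeasure_affine, inv_mul_eq_div]
    rfl
  · push_cast
    ring_nf

theorem tendsto_poissonMeasure_real_lt (hr : Tendsto r atTop atTop)
    (ha : Tendsto (fun N => (r N - a N) / √(r N : ℝ)) atTop (𝓝 s)) :
    Tendsto (fun N => (poissonMeasure (r N)).real {n : ℕ | (n : ℝ) < a N}) atTop
      (𝓝 ((gaussianReal s 1).real (Set.Iio 0))) := by
  let law (N : ℕ) : ProbabilityMeasure ℝ :=
    ⟨(poissonMeasure (r N)).map fun n : ℕ => (√(r N : ℝ))⁻¹ * ((n : ℝ) - a N),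
      Measure.isProbabilityMeasure_map (by fun_prop)⟩
  have convergence : Tendsto law atTop (𝓝 ⟨gaussianReal s 1, inferInstance⟩) :=
    ProbabilityMeasure.tendsto_iff_tendsto_charFun.mpr
      (tendsto_charFun_poissonMeasure_gaussianReal hr ha)
  have null_frontier : gaussianReal s 1 (frontier (Set.Iio 0)) = 0 := by
    have nullSingleton := nullSingletonClass_gaussianReal (μ := s) (one_ne_zero (α := ℝ≥0))
    simp
  have measure_Iio := ProbabilityMeasure.tendsto_measure_of_null_frontier_of_tendsto' convergence
    null_frontier
  refine ((ENNReal.tendsto_toReal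
    (measure_ne_top (gaussianReal s 1) _)).comp measure_Iio).congr' ?_
  filter_upwards [hr.eventually_gt_atTop 0] with N hN
  have preimage : (fun n : ℕ => (√(r N : ℝ))⁻¹ * ((n : ℝ) - a N)) ⁻¹' Set.Iio 0 =
      {n : ℕ | (n : ℝ) < a N} := by
    ext n
    have scale_pos : 0 < (√(r N : ℝ))⁻¹ := by positivity
    simp [mul_neg_iff, scale_pos, scale_pos.not_gt]
  simp only [law, Function.comp_apply, ProbabilityMeasure.coe_mk, Measure.real]
  rw [Measure.map_apply (by fun_prop) measurableSet_Iio, preimage]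

theorem gaussianReal_real_Iio_zero (s : ℝ) :
    (gaussianReal s 1).real (Set.Iio 0) = truncatedHermitePairing s 0 0 := by
  have reflect : (gaussianReal s 1).real (Set.Iio 0) = (gaussianReal 0 1).real (Set.Ioi s) := by
    rw [← sub_zero s, ← gaussianReal_map_const_sub, sub_zero,
      map_measureReal_apply (by fun_prop) measurableSet_Iio]
    congr 1
    ext t
    simp
  rw [reflect, measureReal_def, gaussianReal_apply_eq_integral 0 one_ne_zero,
    ENNReal.toReal_ofReal (integral_nonneg (gaussianPDFReal_nonneg 0 1)),
    truncatedHermitePairing_zero_zero, ← integral_const_mul]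
  simp [gaussianPDFReal]

theorem sum_range_poissonWeight_eq_poissonMeasure_real (r : ℝ≥0) (N : ℕ) :
    ∑ j ∈ Finset.range N, poissonWeight r j = (poissonMeasure r).real {n : ℕ | (n : ℝ) < N} := by
  have range_eq : {n : ℕ | (n : ℝ) < N} = (Finset.range N : Set ℕ) := by ext; simp
  rw [range_eq, ← sum_measureReal_singleton]
  exact Finset.sum_congr rfl fun j _ => (poissonMeasure_real_singleton r j).symm

end PoissonCentralLimit

section CharlierAsymptotics

open Polynomial

theorem tendsto_eval_charlierPoly_div_sqrt_pow {ι : Type*} {l : Filter ι} {θ a : ι → ℝ} {s : ℝ}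
    (hθ : Tendsto θ l atTop) (ha : Tendsto (fun i => (θ i - a i) / √(θ i)) l (𝓝 s)) (n : ℕ) :
    Tendsto (fun i => (charlierPoly (θ i) n).eval (a i) / √(θ i) ^ n) l
      (𝓝 (aeval s (hermite n))) := by
  induction n using Nat.twoStepInduction with
  | zero => simpa [charlierPoly_zero] using tendsto_const_nhds
  | one => simpa [eval_charlierPoly_succ, charlierPoly_zero] using ha
  | more n ih ih_succ =>
    have inv_sqrt : Tendsto (fun i => (√(θ i))⁻¹) l (𝓝 0) :=
      (Real.tendsto_sqrt_atTop.comp hθ).inv_tendsto_atTop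
    have recurrence := ((ha.add (inv_sqrt.const_mul (n + 1 : ℝ))).mul ih_succ).sub
      (ih.const_mul (n + 1 : ℝ))
    rw [mul_zero, add_zero, ← aeval_hermite_add_two] at recurrence
    refine recurrence.congr' ?_
    filter_upwards [hθ.eventually_gt_atTop 0] with i hi
    rw [eval_charlierPoly_add_two]
    field_simp
    linear_combination (-(n + 1) * √(θ i) ^ (2 * n + 2) * (charlierPoly (θ i) n).eval (a i)) *
      Real.sq_sqrt hi.le

theorem tendsto_sqrt_mul_poissonWeight_self :
    Tendsto (fun N : ℕ => √(N : ℝ) * poissonWeight N N) atTop (𝓝 (√(2 * Real.pi))⁻¹) := by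
  have stirling := (Asymptotics.isEquivalent_iff_tendsto_one
    (by filter_upwards [eventually_gt_atTop 0] with N hN; positivity)).mp
    Stirling.factorial_isEquivalent_stirling
  have inv_stirling := (stirling.inv₀ one_ne_zero).const_mul (√(2 * Real.pi))⁻¹
  rw [inv_one, mul_one] at inv_stirling
  refine inv_stirling.congr' ?_
  filter_upwards [eventually_gt_atTop 0] with N hN
  have sqrt_eq : √(2 * (N : ℝ) * Real.pi) = √(2 * Real.pi) * √(N : ℝ) := by
    rw [mul_right_comm, Real.sqrt_mul (by positivity)]
  simp only [Pi.div_apply, poissonWeight, sqrt_eq, div_pow, ← Real.exp_nat_mul,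
    mul_one, Real.exp_neg]
  field_simp

theorem poissonWeight_eq_exp_mul_poissonWeight_self {θ : ℝ} (hθ : 0 < θ) {N : ℕ} (hN : N ≠ 0) :
    poissonWeight θ N =
      Real.exp (N * (Real.log (1 + (θ - N) / N) - (θ - N) / N)) * poissonWeight N N := by
  have one_add : 1 + (θ - N) / N = θ / N := by field_simp; ring
  have exp_log : Real.exp (N * Real.log (θ / N)) = θ ^ N / N ^ N := by
    rw [Real.exp_nat_mul, Real.exp_log (by positivity), div_pow]
  rw [one_add, mul_sub, mul_div_cancel₀ _ (Nat.cast_ne_zero.mpr hN), Real.exp_sub, exp_log,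
    poissonWeight, poissonWeight, Real.exp_sub, Real.exp_neg, Real.exp_neg]
  field_simp

/-- The scaling regime `θ N = N + s * √N + o(√N)`, in which the Charlier ensemble converges to the
discrete Hermite process. -/
def HermiteScaling (θ : ℕ → ℝ) (s : ℝ) : Prop :=
  Tendsto (fun N : ℕ => (θ N - N) / √(N : ℝ)) atTop (𝓝 s)

namespace HermiteScaling

variable {θ : ℕ → ℝ} {s : ℝ}

theorem tendsto_sub_natCast_div_natCast (h : HermiteScaling θ s) :
    Tendsto (fun N : ℕ => (θ N - N) / N) atTop (𝓝 0) := by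
  have ratio := h.div_atTop (Real.tendsto_sqrt_atTop.comp tendsto_natCast_atTop_atTop)
  simpa only [Function.comp_def, div_div, Real.mul_self_sqrt, Nat.cast_nonneg] using ratio

theorem tendsto_div_natCast (h : HermiteScaling θ s) :
    Tendsto (fun N : ℕ => θ N / N) atTop (𝓝 1) := by
  have one_add := h.tendsto_sub_natCast_div_natCast.add_const 1
  rw [zero_add] at one_add
  refine one_add.congr' ?_
  filter_upwards [eventually_ne_atTop 0] with N hN
  field_simp
  ring

theorem tendsto_atTop (h : HermiteScaling θ s) : Tendsto θ atTop atTop := by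
  refine (h.tendsto_div_natCast.pos_mul_atTop one_pos
    (tendsto_natCast_atTop_atTop (R := ℝ))).congr' ?_
  filter_upwards [eventually_ne_atTop 0] with N hN
  exact div_mul_cancel₀ _ (Nat.cast_ne_zero.mpr hN)

theorem eventually_pos (h : HermiteScaling θ s) : ∀ᶠ N in atTop, 0 < θ N :=
  h.tendsto_atTop.eventually_gt_atTop 0

theorem tendsto_sqrt_natCast_div_sqrt (h : HermiteScaling θ s) :
    Tendsto (fun N : ℕ => √(N : ℝ) / √(θ N)) atTop (𝓝 1) := by
  simpa only [inv_div, inv_one, Real.sqrt_one, Real.sqrt_div (Nat.cast_nonneg _)] using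
    (h.tendsto_div_natCast.inv₀ one_ne_zero).sqrt

theorem tendsto_sub_natCast_div_sqrt (h : HermiteScaling θ s) :
    Tendsto (fun N : ℕ => (θ N - N) / √(θ N)) atTop (𝓝 s) := by
  have rescaled := h.mul h.tendsto_sqrt_natCast_div_sqrt
  rw [mul_one] at rescaled
  refine rescaled.congr' ?_
  filter_upwards [eventually_gt_atTop 0] with N hN
  exact div_mul_div_cancel₀ (by positivity)

theorem tendsto_sub_natCast_sub_one_div_sqrt (h : HermiteScaling θ s) :
    Tendsto (fun N : ℕ => (θ N - (N - 1)) / √(θ N)) atTop (𝓝 s) := by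
  have inv_sqrt : Tendsto (fun N => (√(θ N))⁻¹) atTop (𝓝 0) :=
    (Real.tendsto_sqrt_atTop.comp h.tendsto_atTop).inv_tendsto_atTop
  have shifted := h.tendsto_sub_natCast_div_sqrt.add inv_sqrt
  rw [add_zero] at shifted
  exact shifted.congr fun N => by ring

theorem tendsto_sqrt_mul_poissonWeight (h : HermiteScaling θ s) :
    Tendsto (fun N : ℕ => √(N : ℝ) * poissonWeight (θ N) N) atTop
      (𝓝 ((√(2 * Real.pi))⁻¹ * Real.exp (-s ^ 2 / 2))) := by
  have second_order : Tendsto (fun N : ℕ => (N : ℝ) * ((θ N - N) / N) ^ 2) atTop (𝓝 (s ^ 2)) := by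
    refine (h.pow 2).congr' ?_
    filter_upwards [eventually_gt_atTop 0] with N hN
    rw [div_pow, Real.sq_sqrt N.cast_nonneg]
    field_simp
  have exponent := tendsto_mul_of_isLittleO_sq log_one_add_sub_isLittleO_sq
    h.tendsto_sub_natCast_div_natCast second_order
  rw [div_mul_eq_mul_div, neg_one_mul] at exponent
  refine (tendsto_sqrt_mul_poissonWeight_self.mul exponent.rexp).congr' ?_
  filter_upwards [eventually_ne_atTop 0, h.eventually_pos] with N hN hpos
  rw [poissonWeight_eq_exp_mul_poissonWeight_self hpos hN]
  ring

theorem tendsto_natCast_mul_poissonWeight_div_sqrt (h : HermiteScaling θ s) :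
    Tendsto (fun N : ℕ => N * poissonWeight (θ N) N / √(θ N)) atTop
      (𝓝 ((√(2 * Real.pi))⁻¹ * Real.exp (-s ^ 2 / 2))) := by
  have product := h.tendsto_sqrt_natCast_div_sqrt.mul h.tendsto_sqrt_mul_poissonWeight
  rw [one_mul] at product
  refine product.congr fun N => ?_
  rw [div_mul_eq_mul_div, ← mul_assoc, Real.mul_self_sqrt N.cast_nonneg]

theorem tendsto_truncatedCharlierPairing_zero_zero (h : HermiteScaling θ s) :
    Tendsto (fun N => truncatedCharlierPairing (θ N) N 0 0) atTop
      (𝓝 (truncatedHermitePairing s 0 0)) := by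
  have coe_toNNReal : ∀ᶠ N in atTop, ((θ N).toNNReal : ℝ) = θ N :=
    h.eventually_pos.mono fun N hpos => Real.coe_toNNReal _ hpos.le
  have cdf := tendsto_poissonMeasure_real_lt (r := fun N => (θ N).toNNReal) (a := fun N => (N : ℝ))
    (tendsto_real_toNNReal_atTop.comp h.tendsto_atTop)
    (h.tendsto_sub_natCast_div_sqrt.congr' (coe_toNNReal.mono fun N hN => by simp only [hN]))
  rw [gaussianReal_real_Iio_zero] at cdf
  refine cdf.congr' ?_
  filter_upwards [coe_toNNReal] with N hN
  rw [← sum_range_poissonWeight_eq_poissonMeasure_real, hN, truncatedCharlierPairing_zero_zero]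

theorem tendsto_truncatedCharlierPairing_succ_zero (h : HermiteScaling θ s) (n : ℕ) :
    Tendsto (fun N => truncatedCharlierPairing (θ N) N (n + 1) 0 / √(θ N) ^ (n + 1)) atTop
      (𝓝 (truncatedHermitePairing s (n + 1) 0)) := by
  rw [truncatedHermitePairing_succ_zero]
  refine (h.tendsto_natCast_mul_poissonWeight_div_sqrt.mul
    (tendsto_eval_charlierPoly_div_sqrt_pow h.tendsto_atTop
      h.tendsto_sub_natCast_sub_one_div_sqrt n)).congr fun N => ?_
  rw [truncatedCharlierPairing_succ_zero, div_mul_div_comm, pow_succ']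

theorem tendsto_truncatedCharlierPairing (h : HermiteScaling θ s) (n m : ℕ) :
    Tendsto (fun N => truncatedCharlierPairing (θ N) N n m / (√(θ N) ^ n * √(θ N) ^ m)) atTop
      (𝓝 (truncatedHermitePairing s n m)) := by
  induction n generalizing m with
  | zero =>
    cases m with
    | zero => simpa using h.tendsto_truncatedCharlierPairing_zero_zero
    | succ m =>
      simpa [truncatedCharlierPairing_comm _ _ 0, truncatedHermitePairing_comm s 0] using
        h.tendsto_truncatedCharlierPairing_succ_zero m
  | succ n ih =>
    cases m with
    | zero => simpa using h.tendsto_truncatedCharlierPairing_succ_zero n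
    | succ m =>
      have boundary := (h.tendsto_natCast_mul_poissonWeight_div_sqrt.mul
        (tendsto_eval_charlierPoly_div_sqrt_pow h.tendsto_atTop
          h.tendsto_sub_natCast_sub_one_div_sqrt n)).mul
        (tendsto_eval_charlierPoly_div_sqrt_pow h.tendsto_atTop h.tendsto_sub_natCast_div_sqrt
          (m + 1))
      rw [truncatedHermitePairing_succ_succ]
      refine (((ih m).const_mul (m + 1 : ℝ)).add boundary).congr' ?_
      filter_upwards [h.eventually_pos] with N hN
      rw [truncatedCharlierPairing_succ_succ]
      field_simp
      linear_combination ((m + 1) * truncatedCharlierPairing (θ N) N n m * √(θ N) ^ (n + m + 1)) *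
        Real.sq_sqrt hN.le

theorem tendsto_charlierKernel (h : HermiteScaling θ s) (x y : ℕ) :
    Tendsto (fun N => charlierKernel (θ N) N x y) atTop (𝓝 (discreteHermiteKernel s x y)) := by
  rw [discreteHermiteKernel_eq_truncatedHermitePairing_div]
  refine ((h.tendsto_truncatedCharlierPairing x y).div_const _).congr' ?_
  filter_upwards [h.eventually_pos] with N hN
  have sqrt_norm (n : ℕ) : √((n ! : ℝ) * θ N ^ n) = √(n ! : ℝ) * √(θ N) ^ n := by
    rw [Real.sqrt_eq_iff_eq_sq (by positivity) (by positivity), mul_pow, pow_right_comm,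
      Real.sq_sqrt hN.le, Real.sq_sqrt (by positivity)]
  rw [charlierKernel_eq_truncatedCharlierPairing_div hN, sqrt_norm, sqrt_norm, div_div]
  ring_nf

end HermiteScaling

end CharlierAsymptotics

/-- Main theorem: the correlation functions of the `N`-particle Charlier ensemble (equal to
the poissonized Schur–Weyl measure with `θ = ν/N` under `x_i = λ_i + N − i`) in the regime
`(θ(N) − N)/√N → s` (i.e. `ν = N² + (s+o(1))·N^{3/2}`) converge to the determinants of the
discrete Hermite kernel: for any `k ≥ 1` and distinct `y_1, …, y_k ∈ ℕ`,
`lim_{N→∞} Z(N,θ(N))⁻¹ · Σ_{|S| = N, S ⊇ {y_1,…,y_k}} weight_{θ(N)}(S)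
  = det[K_s(y_i,y_j)]_{i,j=1}^k`. -/
theorem charlier_correlation_functions_tendsto_hermite_determinant
    (s : ℝ) (θ : ℕ → ℝ) (hpos : ∀ N, 0 < θ N)
    (hlim : Tendsto (fun N : ℕ => (θ N - (N : ℝ)) / Real.sqrt (N : ℝ)) atTop (𝓝 s))
    (k : ℕ) (hk : 1 ≤ k) (y : Fin k → ℕ) (hy : Function.Injective y) :
    Tendsto
      (fun N : ℕ =>
        (∑' S : {S : Finset ℕ // S.card = N ∧ ∀ i : Fin k, y i ∈ S},
            charlierWeight (θ N) (S : Finset ℕ)) /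
          ∑' S : {S : Finset ℕ // S.card = N}, charlierWeight (θ N) (S : Finset ℕ))
      atTop
      (𝓝 (Matrix.det (Matrix.of fun i j : Fin k => discreteHermiteKernel s (y i) (y j)))) := by
  have correlation (N : ℕ) := charlier_correlation_eq_det_charlierKernel (hpos N) N ⟨y, hy⟩
  simp only [Function.Embedding.coeFn_mk] at correlation
  simp only [correlation]
  refine (continuous_id.matrix_det.tendsto _).comp ?_
  exact tendsto_pi_nhds.mpr fun i => tendsto_pi_nhds.mpr fun j =>
    HermiteScaling.tendsto_charlierKernel hlim (y i) (y j)

end
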